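/- Assume the Continuum Hypothesis. Let X be a productively quasi-Lindelöf topological space such that every open cover of X^ω has a point-𝔠 refinement consisting of basic open sets. Then X is powerfully quasi-Lindelöf. -/

import Mathlib

open Set Cardinal Topology

universe u v

/-- A space is quasi-Lindelöf if every open cover has a countable subcover
(no separation axioms assumed). -/
def QuasiLindelofSp (X : Type u) [TopologicalSpace X] : Prop :=
  ∀ 𝒰 : Set (Set X), (∀ U ∈ 𝒰, IsOpen U) → ⋃₀ 𝒰 = Set.univ →
    ∃ 𝒱 ⊆ 𝒰, 𝒱.Countable ∧ ⋃₀ 𝒱 = Set.univ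

/-- Lindelöf in the sense of Engelking: regular (T3, including T1) and
every open cover has a countable subcover. -/
def EngLindelofSp (X : Type u) [TopologicalSpace X] : Prop :=
  RegularSpace X ∧ T1Space X ∧ QuasiLindelofSp X

/-- X is productively Lindelöf if X × Y is Lindelöf for every Lindelöf space Y. -/
def ProductivelyLindelofSp (X : Type u) [TopologicalSpace X] : Prop :=
  ∀ (Y : Type u) [TopologicalSpace Y], EngLindelofSp Y → EngLindelofSp (X × Y)

/-- X is productively quasi-Lindelöf if X × Y is quasi-Lindelöf for every Lindelöf space Y. -/
def ProductivelyQuasiLindelofSp (X : Type u) [TopologicalSpace X] : Prop :=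
  ∀ (Y : Type u) [TopologicalSpace Y], EngLindelofSp Y → QuasiLindelofSp (X × Y)

/-- X is powerfully Lindelöf if X^ω is Lindelöf. -/
def PowerfullyLindelofSp (X : Type u) [TopologicalSpace X] : Prop :=
  EngLindelofSp (ℕ → X)

/-- X is powerfully quasi-Lindelöf if X^ω is quasi-Lindelöf. -/
def PowerfullyQuasiLindelofSp (X : Type u) [TopologicalSpace X] : Prop :=
  QuasiLindelofSp (ℕ → X)

/-- Tightness of X is at most κ. -/
def TightnessLE (X : Type u) [TopologicalSpace X] (κ : Cardinal.{u}) : Prop :=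
  ∀ (A : Set X) (x : X), x ∈ closure A → ∃ B ⊆ A, #B ≤ κ ∧ x ∈ closure B

/-- X has countable tightness. -/
def CountableTightness (X : Type u) [TopologicalSpace X] : Prop :=
  ∀ (A : Set X) (x : X), x ∈ closure A → ∃ B ⊆ A, B.Countable ∧ x ∈ closure B

/-- The Lindelöf number of X is at most κ: every open cover has a subcover of size ≤ κ. -/
def LindelofNumberLE (X : Type u) [TopologicalSpace X] (κ : Cardinal.{u}) : Prop :=
  ∀ 𝒰 : Set (Set X), (∀ U ∈ 𝒰, IsOpen U) → ⋃₀ 𝒰 = Set.univ →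
    ∃ 𝒱 ⊆ 𝒰, #𝒱 ≤ κ ∧ ⋃₀ 𝒱 = Set.univ

/-- The weight of X is at most κ: there is a base of size ≤ κ. -/
def WeightLE (X : Type u) [TopologicalSpace X] (κ : Cardinal.{u}) : Prop :=
  ∃ B : Set (Set X), TopologicalSpace.IsTopologicalBasis B ∧ #B ≤ κ

/-- N is a network for X. -/
def IsNetwork (X : Type u) [TopologicalSpace X] (N : Set (Set X)) : Prop :=
  ∀ (x : X) (U : Set X), IsOpen U → x ∈ U → ∃ n ∈ N, x ∈ n ∧ n ⊆ U

/-- X is linearly Lindelöf: regular (incl. T1) and every open cover linearly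
ordered by inclusion has a countable subcover. -/
def LinearlyLindelofSp (X : Type u) [TopologicalSpace X] : Prop :=
  RegularSpace X ∧ T1Space X ∧
    ∀ 𝒰 : Set (Set X), (∀ U ∈ 𝒰, IsOpen U) → IsChain (· ⊆ ·) 𝒰 → ⋃₀ 𝒰 = Set.univ →
      ∃ 𝒱 ⊆ 𝒰, 𝒱.Countable ∧ ⋃₀ 𝒱 = Set.univ

/-- U ⊆ X^ω is a basic open set: a product of open sets, all but finitely many of
which equal X. -/
def IsBasicOpen (X : Type u) [TopologicalSpace X] (U : Set (ℕ → X)) : Prop :=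
  ∃ V : ℕ → Set X, (∀ i, IsOpen (V i)) ∧ {i | V i ≠ Set.univ}.Finite ∧
    U = Set.pi Set.univ V

/-- A family of subsets of Z is point-κ if every point belongs to at most κ members. -/
def PointLE {Z : Type u} (𝒲 : Set (Set Z)) (κ : Cardinal.{u}) : Prop :=
  ∀ z : Z, #({W ∈ 𝒲 | z ∈ W}) ≤ κ

/-- A non-empty space is zero-dimensional if it is T1 and has a base of clopen sets. -/
def ZeroDimensionalSp (Y : Type u) [TopologicalSpace Y] : Prop :=
  Nonempty Y ∧ T1Space Y ∧
    ∃ B : Set (Set Y), TopologicalSpace.IsTopologicalBasis B ∧ ∀ b ∈ B, IsClopen b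

/-!
Code a point `x` of `X` by the vector `incidence O x ∈ 2^J` telling which members of a family
`O` of open sets, indexed by a set `J` of size `𝔠 = ℵ₁`, contain `x`. If uncountably many of these
vectors were concentrated about a Lindelöf set `T` of codes of covers of `X`, then `T` together with
them, made isolated, would be a Lindelöf space whose product with `X` is not Lindelöf. Since a
closed Baire set depends on countably many coordinates and there are only `ℵ₁` of them, it follows
that `X` behaves like an Alster space: if a family of closed Baire sets of the cube catches
every compact set of codes of non-covers, then countably many of its members contain all the
incidence vectors.

Let `X^ω` be covered by at most `𝔠` basic open sets, with no countable subcover. Applying the Alster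
property to one coordinate after the other yields compact sets `K 0, K 1, …` of codes of non-covers
such that no box of closed Baire sets around finitely many of them pulls back to a countably covered
set. This contradicts the compactness of `∏ k, K k`.

If the cover is only point-`𝔠`, choose `M ⊆ X` of size at most `𝔠` such that a countable family of
members meeting `M^ω` covers `X^ω` as soon as it covers `M^ω`. At most `𝔠` members meet `M^ω`, and
they cover `(closure M)^ω`, to which the first case applies.
-/

section GeneralTopology

variable {X Y : Type*} [TopologicalSpace X] [TopologicalSpace Y]

theorem quasiLindelofSp_iff_lindelofSpace {X : Type u} [TopologicalSpace X] :
    QuasiLindelofSp X ↔ LindelofSpace X := by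
  constructor
  · intro h
    refine ⟨isLindelof_of_countable_subcover fun {ι} U hU hc => ?_⟩
    obtain ⟨𝒱, h𝒱, h𝒱c, h𝒱u⟩ := h (range U) (forall_mem_range.2 hU)
      (by rw [sUnion_range]; exact univ_subset_iff.1 hc)
    obtain ⟨t, rfl, ht⟩ := exists_image_eq_injOn_of_subset_range h𝒱
    exact ⟨t, countable_of_injective_of_countable_image ht h𝒱c, by rw [← sUnion_image, h𝒱u]⟩
  · intro h 𝒰 hU hc
    obtain ⟨𝒱, h𝒱, h𝒱c, h𝒱u⟩ := h.1.elim_countable_subcover_image (b := 𝒰) (c := id) hU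
      (by simp only [id, ← sUnion_eq_biUnion, hc, subset_rfl])
    exact ⟨𝒱, h𝒱, h𝒱c, univ_subset_iff.1 (by rwa [sUnion_eq_biUnion])⟩

theorem isLindelof_preimage_of_isProperMap {f : X → Y} (hf : IsProperMap f) {s : Set Y}
    (hs : IsLindelof s) : IsLindelof (f ⁻¹' s) := by
  intro ℱ _ _ hℱ
  obtain ⟨y, hy, hℱy⟩ := hs (f := ℱ.map f) (Filter.map_le_iff_le_comap.2 (by simpa using hℱ))
  obtain ⟨x, rfl, hx⟩ := hf.clusterPt_of_mapClusterPt hℱy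
  exact ⟨x, hy, hx⟩

theorem isLindelof_of_forall_exists_isLindelof_between {T : Set X}
    (hT : ∀ V, IsOpen V → T ⊆ V → ∃ L, IsLindelof L ∧ T ⊆ L ∧ L ⊆ V) : IsLindelof T := by
  refine isLindelof_of_countable_subcover fun {ι} U hU hTU => ?_
  obtain ⟨L, hL, hTL, hLU⟩ := hT _ (isOpen_iUnion hU) hTU
  obtain ⟨r, hr, hLr⟩ := hL.elim_countable_subcover U hU hLU
  exact ⟨r, hr, hTL.trans hLr⟩

theorem isLindelof_union_of_concentrated {T D : Set X} (hT : IsLindelof T)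
    (hD : ∀ V, IsOpen V → T ⊆ V → (D \ V).Countable) : IsLindelof (T ∪ D) := by
  refine isLindelof_of_countable_subcover fun {ι} U hU hc => ?_
  obtain ⟨r, hr, hTr⟩ := hT.elim_countable_subcover U hU (subset_union_left.trans hc)
  obtain ⟨s, hs, hDs⟩ :=
    (hD _ (isOpen_biUnion fun i _ => hU i) hTr).isLindelof.elim_countable_subcover U hU
      (sdiff_subset.trans (subset_union_right.trans hc))
  refine ⟨r ∪ s, hr.union hs, ?_⟩
  rw [biUnion_union]
  exact union_subset (subset_union_of_subset_left hTr _) (sdiff_subset_iff.1 hDs)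

theorem exists_isOpen_inter_subset_of_isCompact [T2Space X] {Q : Set X} (hQ : IsCompact Q)
    (hne : Q.Nonempty) {𝓕 : Set (Set X)} (h𝓕 : 𝓕.Countable) (hcl : ∀ F ∈ 𝓕, IsClosed F)
    (hsub : Q ⊆ ⋃₀ 𝓕) : ∃ F ∈ 𝓕, ∃ V, IsOpen V ∧ (Q ∩ V).Nonempty ∧ Q ∩ V ⊆ F := by
  have : CompactSpace Q := isCompact_iff_compactSpace.1 hQ
  have : Nonempty Q := hne.to_subtype
  have : Countable 𝓕 := h𝓕.to_subtype
  obtain ⟨⟨F, hF⟩, x, hx⟩ := nonempty_interior_of_iUnion_of_closed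
    (f := fun F : 𝓕 => ((↑) : Q → X) ⁻¹' F)
    (fun F => (hcl F F.2).preimage continuous_subtype_val)
    (by rw [← preimage_iUnion, ← sUnion_eq_iUnion]; exact eq_univ_of_forall fun x => hsub x.2)
  obtain ⟨V, hV, hVF⟩ := isOpen_induced_iff.1 (isOpen_interior (s := ((↑) : Q → X) ⁻¹' F))
  refine ⟨F, hF, V, hV, ⟨x, x.2, ?_⟩, fun y hy => ?_⟩
  · exact hVF.ge hx
  · have hyV : (⟨y, hy.1⟩ : Q) ∈ ((↑) : Q → X) ⁻¹' V := hy.2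
    have hyF := interior_subset (hVF.le hyV)
    exact hyF

theorem exists_isClosed_kernel [RegularSpace X] {J : Type*} [Preorder J]
    (hJ : ∀ s : Set J, s.Countable → BddAbove s) {G : J → Set X} (hG : Monotone G)
    (hGL : ∀ ξ, IsLindelof (G ξ)ᶜ) {C : Set X} (hC : IsClosed C) (hCG : ∀ ξ, ¬ C ⊆ G ξ) :
    ∃ C' ⊆ C, IsClosed C' ∧ C'.Nonempty ∧
      ∀ U, IsOpen U → ∀ ξ, U ∩ C' ⊆ G ξ → U ∩ C' = ∅ := by
  let 𝒰 : Set (Set X) := {U | IsOpen U ∧ ∃ ξ, U ∩ C ⊆ G ξ}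
  have h𝒰 : IsOpen (⋃₀ 𝒰) := isOpen_sUnion fun U hU => hU.1
  have absorb : ∀ N, IsClosed N → ∀ ξ, N ∩ (C \ ⋃₀ 𝒰) ⊆ G ξ → ∃ δ, N ∩ C ⊆ G δ := by
    intro N hN ξ hNξ
    have hL : IsLindelof ((G ξ)ᶜ ∩ (N ∩ C)) := (hGL ξ).inter_right (hN.inter hC)
    obtain ⟨𝒱, h𝒱, h𝒱c, hcov⟩ := hL.elim_countable_subcover_image (b := 𝒰) (c := id)
      (fun U hU => hU.1) (by
        rintro x ⟨hxξ, hxN, hxC⟩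
        by_contra hx
        exact hxξ (hNξ ⟨hxN, hxC, by rwa [sUnion_eq_biUnion]⟩))
    have : Nonempty J := ⟨ξ⟩
    choose! η hη using fun U (hU : U ∈ 𝒰) => hU.2
    obtain ⟨δ, hδ⟩ := hJ _ ((h𝒱c.image η).insert ξ)
    refine ⟨δ, fun x hx => ?_⟩
    by_cases hxξ : x ∈ G ξ
    · exact hG (hδ (mem_insert _ _)) hxξ
    · obtain ⟨U, hU, hxU⟩ := mem_iUnion₂.1 (hcov ⟨hxξ, hx⟩)
      exact hG (hδ (mem_insert_of_mem _ (mem_image_of_mem η hU))) (hη U (h𝒱 hU) ⟨hxU, hx.2⟩)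
  refine ⟨C \ ⋃₀ 𝒰, sdiff_subset, hC.sdiff h𝒰, ?_, fun U hU ξ hUξ => ?_⟩
  · by_contra hempty
    obtain ⟨ξ, -⟩ := hJ ∅ countable_empty
    obtain ⟨δ, hδ⟩ := absorb univ isClosed_univ ξ (by simp [not_nonempty_iff_eq_empty.1 hempty])
    exact hCG δ (by simpa using hδ)
  · refine eq_empty_iff_forall_notMem.2 fun x hx => ?_
    obtain ⟨N, ⟨hNx, hN⟩, hNU⟩ := (closed_nhds_basis x).mem_iff.1 (hU.mem_nhds hx.1)
    obtain ⟨δ, hδ⟩ := absorb N hN ξ ((inter_subset_inter_left _ hNU).trans hUξ)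
    exact hx.2.2 ⟨interior N, ⟨isOpen_interior, δ,
      (inter_subset_inter_left _ interior_subset).trans hδ⟩, mem_interior_iff_mem_nhds.2 hNx⟩

end GeneralTopology

section CountableSubsets

variable {J : Type*}

theorem countable_setOf_coe_finset_subset {A : Set J} (hA : A.Countable) :
    {t : Finset J | (t : Set J) ⊆ A}.Countable := by
  refine ((countable_ofPred_finite_subset hA).preimage Finset.coe_injective).mono fun t ht => ?_
  exact ⟨t.finite_toSet, ht⟩

theorem exists_countable_closed_finset (F : Finset J → Set J) (hF : ∀ t, (F t).Countable) :
    ∃ B : Set J, B.Countable ∧ ∀ t : Finset J, ↑t ⊆ B → F t ⊆ B := by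
  let next (A : Set J) : Set J := A ∪ ⋃ t ∈ {t : Finset J | (t : Set J) ⊆ A}, F t
  have hnext : ∀ A : Set J, A.Countable → (next A).Countable := fun A hA =>
    hA.union (.biUnion (countable_setOf_coe_finset_subset hA) fun t _ => hF t)
  have hmono : Monotone fun n => next^[n] ∅ :=
    monotone_nat_of_le_succ fun n => by
      rw [Function.iterate_succ_apply']; exact subset_union_left
  refine ⟨⋃ n, next^[n] ∅, countable_iUnion fun n => ?_, fun t ht => ?_⟩
  · induction n with
    | zero => exact countable_empty
    | succ n ih => rw [Function.iterate_succ_apply']; exact hnext _ ih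
  · obtain ⟨n, hn⟩ := hmono.directed_le.exists_mem_subset_of_finset_subset_biUnion ht
    refine subset_iUnion_of_subset (n + 1) ?_
    rw [Function.iterate_succ_apply']
    exact subset_union_of_subset_right (subset_biUnion_of_mem (u := F) hn) _

theorem exists_forall_lt_of_countable [LinearOrder J] [Uncountable J]
    (hJ : ∀ j : J, (Iio j).Countable) {S : Set J} (hS : S.Countable) : ∃ j, ∀ i ∈ S, i < j := by
  by_contra! hS'
  refine not_countable_univ ((hS.biUnion fun i _ => ((hJ i).insert i)).mono fun j _ => ?_)
  obtain ⟨i, hi, hji⟩ := hS' j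
  exact mem_biUnion hi (by simpa [le_iff_eq_or_lt] using hji)

end CountableSubsets

section CantorCube

variable {J : Type*} {B : Set J} {S : Set (J → Bool)}

theorem preimage_image_domRestrict_of_dependsOn (hS : DependsOn (· ∈ S) B) :
    B.domRestrict ⁻¹' (B.domRestrict '' S) = S := by
  refine (subset_preimage_image _ _).antisymm' ?_
  rintro z ⟨w, hw, hwz⟩
  exact (hS fun i hi => congrFun hwz ⟨i, hi⟩).mp hw

theorem isProperMap_domRestrict : IsProperMap (B.domRestrict : (J → Bool) → B → Bool) :=
  (Pi.continuous_domRestrict B).isProperMap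

theorem isLindelof_of_dependsOn (hB : B.Countable) (hS : DependsOn (· ∈ S) B) : IsLindelof S := by
  have : Countable B := hB.to_subtype
  rw [← preimage_image_domRestrict_of_dependsOn hS]
  exact isLindelof_preimage_of_isProperMap isProperMap_domRestrict
    (HereditarilyLindelofSpace.isLindelof _)

theorem exists_isOpen_inter_preimage_subset_of_dependsOn {C : Set (J → Bool)} (hC : IsClosed C)
    (hne : C.Nonempty) {𝓕 : Set (Set (J → Bool))} (h𝓕 : 𝓕.Countable)
    (hcl : ∀ F ∈ 𝓕, IsClosed F) (hdep : ∀ F ∈ 𝓕, DependsOn (· ∈ F) B) (hsub : C ⊆ ⋃₀ 𝓕) :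
    ∃ F ∈ 𝓕, ∃ V : Set (B → Bool), IsOpen V ∧ (C ∩ B.domRestrict ⁻¹' V).Nonempty ∧
      C ∩ B.domRestrict ⁻¹' V ⊆ F := by
  obtain ⟨_, ⟨F, hF, rfl⟩, V, hV, ⟨_, ⟨z, hz, rfl⟩, hzV⟩, hVF⟩ :=
    exists_isOpen_inter_subset_of_isCompact (hC.isCompact.image (Pi.continuous_domRestrict B))
      (hne.image _) (h𝓕.image (B.domRestrict '' ·))
      (forall_mem_image.2 fun F hF => isProperMap_domRestrict.isClosedMap F (hcl F hF))
      (by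
        rw [sUnion_image, ← image_iUnion₂, ← sUnion_eq_biUnion]
        exact image_mono hsub)
  refine ⟨F, hF, V, hV, ⟨z, hz, hzV⟩, fun w hw => ?_⟩
  rw [← preimage_image_domRestrict_of_dependsOn (hdep F hF)]
  exact hVF ⟨mem_image_of_mem _ hw.1, hw.2⟩

theorem exists_countable_dependsOn_of_measurableSet (hS : MeasurableSet S) :
    ∃ B : Set J, B.Countable ∧ DependsOn (· ∈ S) B := by
  let m : MeasurableSpace (J → Bool) :=
    { MeasurableSet' := fun S => ∃ B : Set J, B.Countable ∧ DependsOn (· ∈ S) B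
      measurableSet_empty := ⟨∅, countable_empty, fun _ _ _ => rfl⟩
      measurableSet_compl := fun S ⟨B, hB, hS⟩ => ⟨B, hB, fun z w h => congrArg Not (hS h)⟩
      measurableSet_iUnion := fun S hS => by
        choose B hB hS using hS
        refine ⟨⋃ n, B n, countable_iUnion hB, fun z w h => ?_⟩
        simp only [mem_iUnion]
        exact congrArg _ (funext fun n => hS n fun i hi => h i (mem_iUnion_of_mem n hi)) }
  refine (iSup_le fun j => ?_ : MeasurableSpace.pi ≤ m) S hS
  rintro _ ⟨s, -, rfl⟩
  exact ⟨{j}, countable_singleton j, fun z w h => congrArg (· ∈ s) (h j rfl)⟩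

/-- The closed Baire subsets of the Cantor cube `2^J`, encoded as the closed sets lying in the
product σ-algebra. They are the closed sets that depend on countably many coordinates only, and they
are few enough to be enumerated along `J`. -/
def IsClosedBaire (Z : Set (J → Bool)) : Prop := IsClosed Z ∧ MeasurableSet Z

theorem IsClosedBaire.exists_countable_dependsOn {Z : Set (J → Bool)} (hZ : IsClosedBaire Z) :
    ∃ B : Set J, B.Countable ∧ DependsOn (· ∈ Z) B :=
  exists_countable_dependsOn_of_measurableSet hZ.2

theorem isClosedBaire_empty : IsClosedBaire (∅ : Set (J → Bool)) := ⟨isClosed_empty, .empty⟩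

theorem IsClosedBaire.biInter {ι : Type*} {I : Set ι} (hI : I.Countable) {Z : ι → Set (J → Bool)}
    (hZ : ∀ i ∈ I, IsClosedBaire (Z i)) : IsClosedBaire (⋂ i ∈ I, Z i) :=
  ⟨isClosed_biInter fun i hi => (hZ i hi).1, .biInter hI fun i hi => (hZ i hi).2⟩

theorem isClosedBaire_preimage_restrict (t : Finset J) (Q : Set (t → Bool)) :
    IsClosedBaire ((t.restrict : (J → Bool) → t → Bool) ⁻¹' Q) :=
  ⟨(isClosed_discrete Q).preimage (by fun_prop),
    (Finset.measurable_restrict t) (.of_discrete)⟩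

theorem exists_isClosedBaire_between {V : Set (J → Bool)} (hS : IsLindelof S) (hV : IsOpen V)
    (hSV : S ⊆ V) : ∃ Z, IsClosedBaire Z ∧ Vᶜ ⊆ Z ∧ Z ⊆ Sᶜ := by
  obtain ⟨𝒱, h𝒱, h𝒱c, hcov⟩ := hS.elim_countable_subcover_image
    (b := {W | IsOpen W ∧ MeasurableSet W ∧ W ⊆ V}) (c := id) (fun W hW => hW.1) (by
      intro z hz
      obtain ⟨t, v, hv, htV⟩ := isOpen_pi_iff.1 hV z (hSV hz)
      exact mem_biUnion (x := (t : Set J).pi v)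
        ⟨isOpen_set_pi t.finite_toSet fun i hi => (hv i hi).1,
          .pi t.countable_toSet fun i _ => .of_discrete, htV⟩ fun i hi => (hv i hi).2)
  replace hcov : S ⊆ ⋃₀ 𝒱 := by rwa [sUnion_eq_biUnion]
  exact ⟨(⋃₀ 𝒱)ᶜ, ⟨(isOpen_sUnion fun W hW => (h𝒱 hW).1).isClosed_compl,
    (MeasurableSet.sUnion h𝒱c fun W hW => (h𝒱 hW).2.1).compl⟩,
    compl_subset_compl.2 (sUnion_subset fun W hW => (h𝒱 hW).2.2), compl_subset_compl.2 hcov⟩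

theorem mk_setOf_isClosedBaire_le {J : Type u} (hJ : #J ≤ 𝔠) :
    #{Z : Set (J → Bool) | IsClosedBaire Z} ≤ 𝔠 := by
  refine (mk_le_mk_of_subset fun Z hZ => hZ.2).trans
    (?_ : #{Z : Set (J → Bool) | MeasurableSet Z} ≤ 𝔠)
  rw [MeasurableSpace.pi, MeasurableSpace.measurableSpace_iSup_eq]
  refine MeasurableSpace.cardinal_measurableSet_le_continuum ?_
  refine (mk_le_mk_of_subset (t := range fun p : J × Set Bool => Function.eval p.1 ⁻¹' p.2)
    ?_).trans (mk_range_le.trans ?_)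
  · rintro s ⟨j, t, -, rfl⟩
    exact ⟨(j, t), rfl⟩
  rw [mk_prod, lift_uzero]
  exact mul_le_of_le aleph0_le_continuum hJ
    ((lift_lt_aleph0.2 mk_lt_aleph0).le.trans aleph0_le_continuum)

end CantorCube

section ConcentratedSets

variable {X Y J : Type*} [TopologicalSpace X] [TopologicalSpace Y]

theorem exists_isOpen_prod_sInter_subset {T : Set X} (hT : IsLindelof T) {y : Y} {V : Set (X × Y)}
    (hV : IsOpen V) (hTV : T ×ˢ {y} ⊆ V) :
    ∃ U, IsOpen U ∧ T ⊆ U ∧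
      ∃ 𝒩 : Set (Set Y), 𝒩.Countable ∧ (∀ N ∈ 𝒩, N ∈ 𝓝 y) ∧ U ×ˢ ⋂₀ 𝒩 ⊆ V := by
  let 𝒰 : Set (Set X × Set Y) := {p | IsOpen p.1 ∧ p.2 ∈ 𝓝 y ∧ p.1 ×ˢ p.2 ⊆ V}
  obtain ⟨𝒱, h𝒱, h𝒱c, hT𝒱⟩ := hT.elim_countable_subcover_image (b := 𝒰) (c := Prod.fst)
    (fun p hp => hp.1) (by
      intro t ht
      obtain ⟨U, N, hU, hN, htU, hyN, hUN⟩ := isOpen_prod_iff.1 hV t y (hTV ⟨ht, rfl⟩)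
      exact mem_biUnion (x := (U, N)) ⟨hU, hN.mem_nhds hyN, hUN⟩ htU)
  refine ⟨⋃ p ∈ 𝒱, p.1, isOpen_biUnion fun p hp => (h𝒱 hp).1, hT𝒱, Prod.snd '' 𝒱, h𝒱c.image _,
    forall_mem_image.2 fun p hp => (h𝒱 hp).2.1, ?_⟩
  rintro ⟨z, w⟩ ⟨hz, hw⟩
  obtain ⟨p, hp, hzp⟩ := mem_iUnion₂.1 hz
  exact (h𝒱 hp).2.2 ⟨hzp, hw _ (mem_image_of_mem _ hp)⟩

theorem isLindelof_prod_infty_union_range [TopologicalSpace J] [DiscreteTopology J] {T : Set X}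
    (hT : IsLindelof T) {p : J → X} (hp : ∀ V, IsOpen V → T ⊆ V → {j | p j ∉ V}.Countable) :
    IsLindelof (T ×ˢ {OnePoint.infty} ∪ range fun j => (p j, (j : OnePoint J))) := by
  have hT' : IsLindelof (T ×ˢ {(OnePoint.infty : OnePoint J)}) := by
    rw [prod_singleton]
    exact hT.image (by fun_prop)
  refine isLindelof_union_of_concentrated hT' fun V hV hTV => ?_
  obtain ⟨U, hU, hTU, 𝒩, h𝒩c, h𝒩, hUV⟩ := exists_isOpen_prod_sInter_subset hT hV hTV
  have hcount : ∀ N ∈ 𝒩, {j : J | (j : OnePoint J) ∉ N}.Countable := fun N hN => by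
    have := OnePoint.tendsto_coe_infty (h𝒩 N hN)
    rw [Filter.coclosedCompact_eq_cocompact, Filter.cocompact_eq_cofinite] at this
    exact this.countable
  refine (((hp U hU hTU).union (h𝒩c.biUnion hcount)).image fun j => (p j, (j : OnePoint J))).mono ?_
  rintro _ ⟨⟨j, rfl⟩, hj⟩
  refine mem_image_of_mem _ (by_contra fun hcon => hj (hUV ?_))
  simp only [mem_union, mem_ofPred_eq, mem_iUnion, not_or, not_not, not_exists] at hcon
  exact ⟨hcon.1, fun N hN => hcon.2 N hN⟩

end ConcentratedSets

section CoverCodes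

variable {I J X : Type u} {O : I → Set X} {A B : Set I} {z w : I → Bool}

open Classical in
/-- The point of the cube `2^I` coding which members of the family `O` contain `x`. -/
noncomputable def incidence (O : I → Set X) (x : X) : I → Bool := fun ξ => decide (x ∈ O ξ)

theorem incidence_eq_true_iff {x : X} {ξ : I} : incidence O x ξ = true ↔ x ∈ O ξ := by
  simp [incidence]

/-- The codes `z ∈ 2^I` whose zeros inside `B` index a subfamily of `O` covering `X`. The incidence
vectors `incidence O x` are never such codes. -/
def coverCodes (O : I → Set X) (B : Set I) : Set (I → Bool) :=
  {z | ∀ x, ∃ ξ ∈ B, x ∈ O ξ ∧ z ξ = false}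

theorem coverCodes_mono (h : A ⊆ B) : coverCodes O A ⊆ coverCodes O B := fun _ hz x =>
  let ⟨ξ, hξ, hzξ⟩ := hz x
  ⟨ξ, h hξ, hzξ⟩

theorem notMem_coverCodes_iff :
    z ∉ coverCodes O B ↔ ∃ x, ∀ ξ ∈ B, incidence O x ξ ≤ z ξ := by
  simp only [coverCodes, mem_ofPred_eq, incidence, not_forall, not_exists, not_and,
    Bool.not_eq_false, Bool.le_iff_imp, decide_eq_true_eq]

theorem notMem_coverCodes_of_le (h : ∀ ξ ∈ B, w ξ ≤ z ξ) (hw : w ∉ coverCodes O B) :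
    z ∉ coverCodes O B := by
  obtain ⟨x, hx⟩ := notMem_coverCodes_iff.1 hw
  exact notMem_coverCodes_iff.2 ⟨x, fun ξ hξ => (hx ξ hξ).trans (h ξ hξ)⟩

theorem dependsOn_coverCodes : DependsOn (· ∈ coverCodes O B) B := fun _ _ h =>
  propext <| not_iff_not.1 ⟨notMem_coverCodes_of_le fun ξ hξ => (h ξ hξ).le,
    notMem_coverCodes_of_le fun ξ hξ => (h ξ hξ).ge⟩

variable [TopologicalSpace X]

theorem exists_countable_mem_coverCodes [LindelofSpace X] (hO : ∀ ξ, IsOpen (O ξ))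
    (hz : z ∈ coverCodes O univ) : ∃ A : Set I, A.Countable ∧ z ∈ coverCodes O A := by
  obtain ⟨A, hA, hAc, hcov⟩ := isLindelof_univ.elim_countable_subcover_image
    (b := {ξ | z ξ = false}) (fun ξ _ => hO ξ) fun x _ => by
      obtain ⟨ξ, -, hx, hξ⟩ := hz x
      exact mem_biUnion (x := ξ) hξ hx
  refine ⟨A, hAc, fun x => ?_⟩
  obtain ⟨ξ, hξ, hx⟩ := mem_iUnion₂.1 (hcov (mem_univ x))
  exact ⟨ξ, hξ, hx, hA hξ⟩

theorem ProductivelyQuasiLindelofSp.lindelofSpace (hprod : ProductivelyQuasiLindelofSp X) :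
    LindelofSpace X := by
  have : LindelofSpace (X × PUnit.{u + 1}) := quasiLindelofSp_iff_lindelofSpace.1 <|
    hprod _ ⟨inferInstance, inferInstance, quasiLindelofSp_iff_lindelofSpace.2 inferInstance⟩
  exact .of_continuous_surjective (X := X × PUnit.{u + 1}) continuous_fst Prod.fst_surjective

/-- Otherwise the points `incidence O (x j)`, isolated by a second coordinate, would form together
with `T` a Lindelöf space whose product with `X` is not Lindelöf. -/
theorem ProductivelyQuasiLindelofSp.exists_isOpen_not_countable [Uncountable J]
    (hprod : ProductivelyQuasiLindelofSp X) (hO : ∀ ξ, IsOpen (O ξ)) {T : Set (I → Bool)}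
    (hT : IsLindelof T) (hTO : T ⊆ coverCodes O univ) (x : J → X) :
    ∃ V, IsOpen V ∧ T ⊆ V ∧ ¬ {j | incidence O (x j) ∉ V}.Countable := by
  by_contra! hx
  let : TopologicalSpace J := ⊥
  have : DiscreteTopology J := ⟨rfl⟩
  let Y : Set ((I → Bool) × OnePoint J) :=
    T ×ˢ {OnePoint.infty} ∪ range fun j => (incidence O (x j), (j : OnePoint J))
  have hY : EngLindelofSp Y := ⟨inferInstance, inferInstance, quasiLindelofSp_iff_lindelofSpace.2 <|
    isLindelof_iff_lindelofSpace.1 (isLindelof_prod_infty_union_range hT hx)⟩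
  have := quasiLindelofSp_iff_lindelofSpace.1 (hprod Y hY)
  let U : I ⊕ J → Set (X × Y) := Sum.elim (fun ξ => {q | q.1 ∈ O ξ ∧ q.2.1.1 ξ = false})
    fun j => {q | q.2.1.2 = (j : OnePoint J)}
  have hU : ∀ i, IsOpen (U i) := by
    rintro (ξ | j)
    · exact ((hO ξ).preimage continuous_fst).inter
        ((isOpen_discrete {false}).preimage (by fun_prop : Continuous fun q : X × Y => q.2.1.1 ξ))
    · have hj : IsOpen {(j : OnePoint J)} := by
        simpa using OnePoint.isOpen_image_coe.2 (isOpen_discrete {j})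
      exact hj.preimage (by fun_prop : Continuous fun q : X × Y => q.2.1.2)
  obtain ⟨r, hr, hcov⟩ := isLindelof_univ.elim_countable_subcover U hU (by
    rintro ⟨a, _, ⟨hz, hw⟩ | ⟨j, rfl⟩⟩ -
    · obtain ⟨ξ, -, haξ, hzξ⟩ := hTO hz a
      exact mem_iUnion.2 ⟨Sum.inl ξ, haξ, hzξ⟩
    · exact mem_iUnion.2 ⟨Sum.inr j, rfl⟩)
  obtain ⟨j, hj⟩ : ∃ j, Sum.inr j ∉ r := by
    by_contra! hall
    exact not_countable_univ ((hr.preimage Sum.inr_injective).mono fun j _ => hall j)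
  obtain ⟨ξ | i, hi, hmem⟩ :=
    mem_iUnion₂.1 (hcov (mem_univ (x j, ⟨(incidence O (x j), (j : OnePoint J)), .inr ⟨j, rfl⟩⟩)))
  · exact decide_eq_false_iff_not.1 hmem.2 hmem.1
  · exact hj (OnePoint.coe_injective hmem ▸ hi)

theorem ProductivelyQuasiLindelofSp.exists_range_incidence_subset [LinearOrder J] [Uncountable J]
    (hJ : ∀ j : J, (Iio j).Countable) (hprod : ProductivelyQuasiLindelofSp X)
    (hO : ∀ ξ, IsOpen (O ξ)) {T : Set (I → Bool)} (hT : IsLindelof T)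
    (hTO : T ⊆ coverCodes O univ) {c : J → Set (I → Bool)}
    (hc : ∀ V, IsOpen V → T ⊆ V → ∃ ξ, Vᶜ ⊆ ⋃ i ∈ Iio ξ, c i) :
    ∃ ξ, range (incidence O) ⊆ ⋃ i ∈ Iio ξ, c i := by
  by_contra! hx
  simp only [not_subset, exists_range_iff] at hx
  choose x hx using hx
  obtain ⟨V, hV, hTV, hVc⟩ := hprod.exists_isOpen_not_countable hO hT hTO x
  obtain ⟨ξ, hξ⟩ := hc V hV hTV
  refine hVc ((hJ ξ).mono fun j hj => lt_of_not_ge fun hξj => hx j ?_)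
  exact biUnion_subset_biUnion_left (Iio_subset_Iio hξj) (hξ hj)

end CoverCodes

section Enumeration

variable {J α : Type u}

theorem exists_range_eq_of_mk_le {S : Set α} (hne : S.Nonempty) (hS : #S ≤ #J) :
    ∃ c : J → α, range c = S := by
  obtain ⟨f⟩ := hS
  have : Nonempty S := hne.to_subtype
  refine ⟨(↑) ∘ Function.invFun f, ?_⟩
  rw [range_comp, (Function.invFun_surjective f.injective).range_eq, image_univ, Subtype.range_coe]

theorem uncountable_of_mk_eq_continuum (hJ : #J = 𝔠) : Uncountable J :=
  aleph0_lt_mk_iff.1 (hJ ▸ aleph0_lt_continuum)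

end Enumeration

section SigmaCompact

variable {J X : Type u} {O : J → Set X} {B : Set J} {Z : Set (J → Bool)}

/-- The codes that dominate a member of `Z` on the coordinates in `B`. Enlarging `Z` in this way
makes it depend on `B` only while keeping it disjoint from `coverCodes O B`. -/
def upperHullOn (B : Set J) (Z : Set (J → Bool)) : Set (J → Bool) :=
  {z | ∃ w ∈ Z, ∀ ξ ∈ B, w ξ ≤ z ξ}

theorem isClosed_upperHullOn (hZ : IsClosed Z) : IsClosed (upperHullOn B Z) := by
  have hcl : IsClosed {q : (J → Bool) × (J → Bool) | q.1 ∈ Z ∧ ∀ ξ ∈ B, q.1 ξ ≤ q.2 ξ} := by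
    have hle : IsClosed (⋂ ξ ∈ B, {q : (J → Bool) × (J → Bool) | q.1 ξ ≤ q.2 ξ}) :=
      isClosed_biInter fun ξ _ => (isClosed_discrete {b : Bool × Bool | b.1 ≤ b.2}).preimage
        (by fun_prop : Continuous fun q : (J → Bool) × (J → Bool) => (q.1 ξ, q.2 ξ))
    convert (hZ.preimage continuous_fst).inter hle
    ext q
    simp
  convert isClosedMap_snd_of_compactSpace _ hcl
  ext z
  simp [upperHullOn]

theorem dependsOn_upperHullOn : DependsOn (· ∈ upperHullOn B Z) B := fun _ _ h =>
  propext <| exists_congr fun _ => and_congr_right fun _ => forall₂_congr fun ξ hξ => by rw [h ξ hξ]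

theorem upperHullOn_subset_compl_coverCodes (hZ : Z ⊆ (coverCodes O B)ᶜ) :
    upperHullOn B Z ⊆ (coverCodes O B)ᶜ := fun _ ⟨_, hw, hle⟩ =>
  notMem_coverCodes_of_le hle (hZ hw)

variable [TopologicalSpace X] [LinearOrder J]

theorem ProductivelyQuasiLindelofSp.exists_sigmaCompact_compl_coverCodes
    (hJ : ∀ j : J, (Iio j).Countable) (hcard : #J = 𝔠) (hprod : ProductivelyQuasiLindelofSp X)
    (hO : ∀ ξ, IsOpen (O ξ)) (hB : B.Countable) :
    ∃ 𝒦 : Set (Set (J → Bool)), 𝒦.Countable ∧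
      (∀ K ∈ 𝒦, IsClosed K ∧ DependsOn (· ∈ K) B ∧ K ⊆ (coverCodes O B)ᶜ) ∧
      (coverCodes O B)ᶜ ⊆ ⋃₀ 𝒦 := by
  have := uncountable_of_mk_eq_continuum hcard
  have hL : IsLindelof (coverCodes O B) := isLindelof_of_dependsOn hB dependsOn_coverCodes
  obtain ⟨c, hc⟩ : ∃ c : J → Set (J → Bool),
      range c = {Z | IsClosedBaire Z ∧ Z ⊆ (coverCodes O B)ᶜ} := by
    refine exists_range_eq_of_mk_le ⟨∅, isClosedBaire_empty, empty_subset _⟩ ?_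
    exact (mk_le_mk_of_subset inter_subset_left).trans
      ((mk_setOf_isClosedBaire_le hcard.le).trans hcard.ge)
  have hc' : ∀ i, IsClosedBaire (c i) ∧ c i ⊆ (coverCodes O B)ᶜ := fun i =>
    hc.subset (mem_range_self i)
  obtain ⟨ξ, hξ⟩ := hprod.exists_range_incidence_subset hJ hO hL (coverCodes_mono (subset_univ B))
    (c := c) fun V hV hBV => by
      obtain ⟨Z, hZ, hVZ, hZB⟩ := exists_isClosedBaire_between hL hV hBV
      obtain ⟨i, rfl⟩ := hc.superset ⟨hZ, hZB⟩
      obtain ⟨ξ, hξ⟩ := exists_forall_lt_of_countable hJ (countable_singleton i)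
      exact ⟨ξ, hVZ.trans (subset_biUnion_of_mem (hξ i rfl))⟩
  refine ⟨(fun i => upperHullOn B (c i)) '' Iio ξ, (hJ ξ).image _, forall_mem_image.2 fun i _ =>
    ⟨isClosed_upperHullOn (hc' i).1.1, dependsOn_upperHullOn,
      upperHullOn_subset_compl_coverCodes (hc' i).2⟩, fun z hz => ?_⟩
  obtain ⟨x, hx⟩ := notMem_coverCodes_iff.1 hz
  obtain ⟨i, hi, hxi⟩ := mem_iUnion₂.1 (hξ (mem_range_self x))
  exact mem_sUnion.2 ⟨_, mem_image_of_mem _ hi, incidence O x, hxi, hx⟩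

end SigmaCompact

section Reflection

variable {J X : Type u} {O : J → Set X} [TopologicalSpace X]

theorem exists_countable_image_domRestrict_subset_closure [LindelofSpace X]
    (hO : ∀ ξ, IsOpen (O ξ)) {C : Set (J → Bool)} (hC : C ⊆ closure (C ∩ coverCodes O univ))
    {S : J → Set J} (hS : ∀ j, (S j).Countable) :
    ∃ B : Set J, B.Countable ∧ (∀ i ∈ B, S i ⊆ B) ∧
      B.domRestrict '' C ⊆ closure (B.domRestrict '' (C ∩ coverCodes O B)) := by
  have hA : ∀ (t : Finset J) (q : t → Bool), ∃ A : Set J, A.Countable ∧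
      ((∃ w ∈ C ∩ coverCodes O univ, t.restrict w = q) →
        ∃ w ∈ C ∩ coverCodes O A, t.restrict w = q) := by
    intro t q
    by_cases h : ∃ w ∈ C ∩ coverCodes O univ, t.restrict w = q
    · obtain ⟨w, hw, hwq⟩ := h
      obtain ⟨A, hA, hwA⟩ := exists_countable_mem_coverCodes hO hw.2
      exact ⟨A, hA, fun _ => ⟨w, ⟨hw.1, hwA⟩, hwq⟩⟩
    · exact ⟨∅, countable_empty, fun h' => (h h').elim⟩
  choose A hAc hA using hA
  obtain ⟨B, hB, hclosed⟩ := exists_countable_closed_finset (fun t => (⋃ i ∈ t, S i) ∪ ⋃ q, A t q)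
    fun t => (t.countable_toSet.biUnion fun i _ => hS i).union (countable_iUnion (hAc t))
  refine ⟨B, hB, fun i hi => ?_, ?_⟩
  · refine Subset.trans ?_ (hclosed {i} (by simpa using hi))
    exact subset_union_of_subset_left (by simp) _
  · rintro _ ⟨z, hz, rfl⟩
    refine mem_closure_iff.2 fun U hU hzU => ?_
    obtain ⟨s, v, hv, hsU⟩ := isOpen_pi_iff.1 hU _ hzU
    let t : Finset J := s.map (.subtype (· ∈ B))
    have htB : ↑t ⊆ B := fun i hi => by
      obtain ⟨b, -, rfl⟩ := Finset.mem_map.1 hi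
      exact b.2
    obtain ⟨w, hwz, hw⟩ := mem_closure_iff.1 (hC hz) (t.restrict ⁻¹' {t.restrict z})
      ((isOpen_discrete _).preimage (by fun_prop)) rfl
    obtain ⟨w', hw', hwz'⟩ := hA t (t.restrict z) ⟨w, hw, hwz⟩
    have hAB : A t (t.restrict z) ⊆ B :=
      (subset_union_of_subset_right (subset_iUnion _ _) _).trans (hclosed t htB)
    refine ⟨B.domRestrict w', hsU fun b hb => ?_,
      mem_image_of_mem _ ⟨hw'.1, coverCodes_mono hAB hw'.2⟩⟩
    have hbt : (b : J) ∈ t := Finset.mem_map_of_mem (.subtype (· ∈ B)) hb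
    have hwb : w' b = z b := congrFun hwz' ⟨b, hbt⟩
    exact (congrArg (· ∈ v b) hwb).mpr (hv b hb).2

end Reflection

section Stages

variable {J X : Type u} [LinearOrder J] {O : J → Set X} {c : J → Set (J → Bool)}
  {C : Set (J → Bool)}

/-- An initial part of `⋃ i, c i`. Subtracting `coverCodes O (Iio i)` from `c i`, rather than
`coverCodes O univ`, makes the stage depend on countably many coordinates. -/
def stage (O : J → Set X) (c : J → Set (J → Bool)) (ξ : J) : Set (J → Bool) :=
  ⋃ i ∈ Iio ξ, c i \ coverCodes O (Iio i)

theorem stage_mono : Monotone (stage O c) := fun _ _ h =>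
  biUnion_subset_biUnion_left (Iio_subset_Iio h)

theorem isLindelof_compl_stage (hJ : ∀ j : J, (Iio j).Countable) (hc : ∀ i, IsClosedBaire (c i))
    (ξ : J) : IsLindelof (stage O c ξ)ᶜ := by
  choose D hD hcD using fun i => (hc i).exists_countable_dependsOn
  refine isLindelof_of_dependsOn (B := ⋃ i ∈ Iio ξ, D i ∪ Iio i)
    ((hJ ξ).biUnion fun i _ => (hD i).union (hJ i)) fun z w hzw => ?_
  have hzw' : ∀ i ∈ Iio ξ, ∀ j ∈ D i ∪ Iio i, z j = w j := fun i hi j hj =>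
    hzw j (mem_biUnion hi hj)
  simp only [stage, mem_compl_iff, mem_iUnion, mem_sdiff]
  exact congrArg Not (propext (exists₂_congr fun i hi => and_congr
    (hcD i fun j hj => hzw' i hi j (.inl hj)).to_iff
    (not_congr (dependsOn_coverCodes fun j hj => hzw' i hi j (.inr hj)).to_iff)))

theorem subset_closure_inter_coverCodes [Uncountable J] (hJ : ∀ j : J, (Iio j).Countable)
    (hK : ∀ K, IsCompact K → K ⊆ (coverCodes O univ)ᶜ → ∃ i, K ⊆ c i) (hC : IsClosed C)
    (hker : ∀ U, IsOpen U → ∀ ξ, U ∩ C ⊆ stage O c ξ → U ∩ C = ∅) :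
    C ⊆ closure (C ∩ coverCodes O univ) := by
  intro z hz
  by_contra hzcl
  obtain ⟨N, hN, hNcl, hNsub⟩ :=
    exists_mem_nhds_isClosed_subset (isClosed_closure.isOpen_compl.mem_nhds hzcl)
  have hNC : N ∩ C ⊆ (coverCodes O univ)ᶜ := fun w hw hwO => hNsub hw.1 (subset_closure ⟨hw.2, hwO⟩)
  obtain ⟨i, hi⟩ := hK (N ∩ C) (hNcl.inter hC).isCompact hNC
  obtain ⟨ξ, hξ⟩ := exists_forall_lt_of_countable hJ (countable_singleton i)
  have hNξ : N ∩ C ⊆ stage O c ξ := fun w hw =>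
    mem_biUnion (hξ i rfl) ⟨hi hw, fun hwi => hNC hw (coverCodes_mono (subset_univ _) hwi)⟩
  have hempty := hker _ isOpen_interior ξ ((inter_subset_inter_left C interior_subset).trans hNξ)
  exact hempty.subset ⟨mem_interior_iff_mem_nhds.2 hN, hz⟩

variable [TopologicalSpace X]

theorem ProductivelyQuasiLindelofSp.inter_preimage_subset_compl_coverCodes_or_subset_stage
    (hJ : ∀ j : J, (Iio j).Countable) (hcard : #J = 𝔠) (hprod : ProductivelyQuasiLindelofSp X)
    (hO : ∀ ξ, IsOpen (O ξ)) (hc : ∀ i, IsClosed (c i)) {B : Set J} (hB : B.Countable)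
    (hcB : ∀ i ∈ B, DependsOn (· ∈ c i) B) (hB' : ∀ i ∈ B, Iio i ⊆ B) (hC : IsClosed C)
    (hne : C.Nonempty) (hCc : C ⊆ ⋃ i, c i \ coverCodes O (Iio i)) :
    ∃ V : Set (B → Bool), IsOpen V ∧ (C ∩ B.domRestrict ⁻¹' V).Nonempty ∧
      (C ∩ B.domRestrict ⁻¹' V ⊆ (coverCodes O B)ᶜ ∨
        ∃ ξ, C ∩ B.domRestrict ⁻¹' V ⊆ stage O c ξ) := by
  have := uncountable_of_mk_eq_continuum hcard
  obtain ⟨𝒦, h𝒦, h𝒦B, hB𝒦⟩ := hprod.exists_sigmaCompact_compl_coverCodes hJ hcard hO hB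
  choose 𝒦i h𝒦i h𝒦i' hi𝒦 using fun i =>
    hprod.exists_sigmaCompact_compl_coverCodes hJ hcard hO (hJ i)
  let 𝓕 : Set (Set (J → Bool)) := (⋃ i ∈ B, (c i ∩ ·) '' 𝒦i i) ∪ 𝒦
  have h𝓕 : ∀ F ∈ 𝓕, (∃ i ∈ B, ∃ K ∈ 𝒦i i, c i ∩ K = F) ∨ F ∈ 𝒦 := fun F hF =>
    hF.imp_left fun h => by simpa using h
  have h𝓕' : ∀ F ∈ 𝓕, IsClosed F ∧ DependsOn (· ∈ F) B := by
    intro F hF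
    obtain ⟨i, hi, K, hK, rfl⟩ | hF := h𝓕 F hF
    · obtain ⟨hKcl, hKi, -⟩ := h𝒦i' i K hK
      exact ⟨(hc i).inter hKcl, fun z w h => congrArg₂ And (hcB i hi h)
        (hKi fun j hj => h j (hB' i hi hj))⟩
    · exact ⟨(h𝒦B F hF).1, (h𝒦B F hF).2.1⟩
  have hcov : C ⊆ ⋃₀ 𝓕 := by
    intro z hz
    by_cases hzB : z ∈ coverCodes O B
    · obtain ⟨i, hzi, hzi'⟩ := mem_iUnion.1 (hCc hz)
      have hi : i ∈ B := by
        by_contra hi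
        have hBi : B ⊆ Iio i := fun j hj => lt_of_not_ge fun hij =>
          hij.eq_or_lt.elim (fun h => hi (h ▸ hj)) fun h => hi (hB' j hj h)
        exact hzi' (coverCodes_mono hBi hzB)
      obtain ⟨K, hK, hzK⟩ := hi𝒦 i hzi'
      exact mem_sUnion.2 ⟨c i ∩ K, .inl (mem_biUnion hi (mem_image_of_mem _ hK)), hzi, hzK⟩
    · exact sUnion_subset_sUnion subset_union_right (hB𝒦 hzB)
  obtain ⟨F, hF, V, hV, hVne, hVF⟩ := exists_isOpen_inter_preimage_subset_of_dependsOn hC hne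
    ((hB.biUnion fun i _ => (h𝒦i i).image _).union h𝒦) (fun F hF => (h𝓕' F hF).1)
    (fun F hF => (h𝓕' F hF).2) hcov
  refine ⟨V, hV, hVne, ?_⟩
  obtain ⟨i, _, K, hK, rfl⟩ | hF := h𝓕 F hF
  · obtain ⟨ξ, hξ⟩ := exists_forall_lt_of_countable hJ (countable_singleton i)
    exact .inr ⟨ξ, fun z hz => mem_biUnion (hξ i rfl) ⟨(hVF hz).1, (h𝒦i' i K hK).2.2 (hVF hz).2⟩⟩
  · exact .inl (hVF.trans (h𝒦B F hF).2.2)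

theorem ProductivelyQuasiLindelofSp.subset_stage
    (hJ : ∀ j : J, (Iio j).Countable) (hcard : #J = 𝔠) (hprod : ProductivelyQuasiLindelofSp X)
    (hO : ∀ ξ, IsOpen (O ξ)) (hc : ∀ i, IsClosedBaire (c i))
    (hK : ∀ K, IsCompact K → K ⊆ (coverCodes O univ)ᶜ → ∃ i, K ⊆ c i) (hC : IsClosed C)
    (hCc : C ⊆ ⋃ i, c i \ coverCodes O (Iio i)) : ∃ ξ, C ⊆ stage O c ξ := by
  have := uncountable_of_mk_eq_continuum hcard
  have := hprod.lindelofSpace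
  by_contra! hCG
  have hbdd : ∀ s : Set J, s.Countable → BddAbove s := fun s hs =>
    let ⟨j, hj⟩ := exists_forall_lt_of_countable hJ hs
    ⟨j, fun i hi => (hj i hi).le⟩
  obtain ⟨C', hC'C, hC', hne, hker⟩ :=
    exists_isClosed_kernel hbdd stage_mono (isLindelof_compl_stage hJ hc) hC hCG
  choose D hD hcD using fun i => (hc i).exists_countable_dependsOn
  obtain ⟨B, hB, hBclosed, hBdense⟩ := exists_countable_image_domRestrict_subset_closure hO
    (subset_closure_inter_coverCodes hJ hK hC' hker) (S := fun i => D i ∪ Iio i)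
    fun i => (hD i).union (hJ i)
  have hcB : ∀ i ∈ B, DependsOn (· ∈ c i) B := fun i hi =>
    (hcD i).mono (subset_union_left.trans (hBclosed i hi))
  obtain ⟨V, hV, ⟨z, hz, hzV⟩, hVB | ⟨ξ, hVξ⟩⟩ :=
    hprod.inter_preimage_subset_compl_coverCodes_or_subset_stage hJ hcard hO (fun i => (hc i).1) hB
      hcB (fun i hi => subset_union_right.trans (hBclosed i hi)) hC' hne (hC'C.trans hCc)
  · obtain ⟨_, hwV, w, hw, rfl⟩ := mem_closure_iff.1 (hBdense (mem_image_of_mem _ hz)) V hV hzV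
    exact hVB ⟨hw.1, hwV⟩ hw.2
  · rw [inter_comm] at hVξ
    exact (hker _ (hV.preimage (Pi.continuous_domRestrict B)) ξ hVξ).subset ⟨hzV, hz⟩

/-- This says that `X` behaves like an Alster space, with the closed Baire sets of the cube pulled
back along `incidence O` in place of the `G_δ` sets of `X`. -/
theorem ProductivelyQuasiLindelofSp.exists_countable_range_incidence_subset_sUnion
    (hJ : ∀ j : J, (Iio j).Countable) (hcard : #J = 𝔠) (hprod : ProductivelyQuasiLindelofSp X)
    (hO : ∀ ξ, IsOpen (O ξ)) {𝒵 : Set (Set (J → Bool))} (h𝒵 : ∀ Z ∈ 𝒵, IsClosedBaire Z)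
    (hK : ∀ K, IsCompact K → K ⊆ (coverCodes O univ)ᶜ → ∃ Z ∈ 𝒵, K ⊆ Z) :
    ∃ 𝒟 ⊆ 𝒵, 𝒟.Countable ∧ range (incidence O) ⊆ ⋃₀ 𝒟 := by
  have := uncountable_of_mk_eq_continuum hcard
  obtain ⟨c, rfl⟩ : ∃ c : J → Set (J → Bool), range c = 𝒵 :=
    exists_range_eq_of_mk_le (let ⟨Z, hZ, _⟩ := hK ∅ isCompact_empty (empty_subset _); ⟨Z, hZ⟩)
      ((mk_le_mk_of_subset h𝒵).trans ((mk_setOf_isClosedBaire_le hcard.le).trans hcard.ge))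
  rw [forall_mem_range] at h𝒵
  simp only [exists_range_iff] at hK
  let T : Set (J → Bool) := (⋃ i, c i \ coverCodes O (Iio i))ᶜ
  have hTstage : ∀ ξ, T ⊆ (stage O c ξ)ᶜ := fun ξ =>
    compl_subset_compl.2 (iUnion₂_subset fun i _ => subset_iUnion_of_subset i Subset.rfl)
  have hVstage : ∀ V, IsOpen V → T ⊆ V → ∃ ξ, Vᶜ ⊆ stage O c ξ := fun V hV hTV =>
    hprod.subset_stage hJ hcard hO h𝒵 hK hV.isClosed_compl (compl_subset_comm.1 hTV)
  have hT : IsLindelof T := isLindelof_of_forall_exists_isLindelof_between fun V hV hTV =>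
    let ⟨ξ, hξ⟩ := hVstage V hV hTV
    ⟨_, isLindelof_compl_stage hJ h𝒵 ξ, hTstage ξ, compl_subset_comm.1 hξ⟩
  have hTO : T ⊆ coverCodes O univ := by
    intro z hz
    by_contra hzO
    obtain ⟨i, hi⟩ := hK {z} isCompact_singleton (singleton_subset_iff.2 hzO)
    exact hz (mem_iUnion.2 ⟨i, hi rfl, fun h => hzO (coverCodes_mono (subset_univ _) h)⟩)
  obtain ⟨ξ, hξ⟩ := hprod.exists_range_incidence_subset hJ hO hT hTO (c := c) fun V hV hTV =>
    let ⟨ξ, hξ⟩ := hVstage V hV hTV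
    ⟨ξ, hξ.trans (biUnion_mono Subset.rfl fun i _ => sdiff_subset)⟩
  exact ⟨c '' Iio ξ, image_subset_range _ _, (hJ ξ).image c, by rwa [sUnion_image]⟩

end Stages

section CountableCovers

variable {α ι : Type*} {𝒲 : Set (Set α)}

/-- `A` is covered by countably many members of the family `𝒲`. This is the existence of a
countable subcover, relativized to a subset. -/
def IsCountablyCovered (𝒲 : Set (Set α)) (A : Set α) : Prop :=
  ∃ 𝒱 ⊆ 𝒲, 𝒱.Countable ∧ A ⊆ ⋃₀ 𝒱

theorem isCountablyCovered_biUnion {I : Set ι} (hI : I.Countable) {A : ι → Set α}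
    (hA : ∀ i ∈ I, IsCountablyCovered 𝒲 (A i)) : IsCountablyCovered 𝒲 (⋃ i ∈ I, A i) := by
  choose! 𝒱 h𝒱 h𝒱c hA𝒱 using hA
  exact ⟨⋃ i ∈ I, 𝒱 i, iUnion₂_subset h𝒱, hI.biUnion h𝒱c, iUnion₂_subset fun i hi =>
    (hA𝒱 i hi).trans (sUnion_subset_sUnion (subset_biUnion_of_mem hi))⟩

theorem IsCountablyCovered.mono {A B : Set α} (hB : IsCountablyCovered 𝒲 B) (hAB : A ⊆ B) :
    IsCountablyCovered 𝒲 A :=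
  let ⟨𝒱, h𝒱, h𝒱c, hB𝒱⟩ := hB
  ⟨𝒱, h𝒱, h𝒱c, hAB.trans hB𝒱⟩

theorem IsCountablyCovered.of_refines {α : Type*} {𝒰 𝒲 : Set (Set α)}
    (href : ∀ W ∈ 𝒲, ∃ U ∈ 𝒰, W ⊆ U) {A : Set α} (h : IsCountablyCovered 𝒲 A) :
    IsCountablyCovered 𝒰 A := by
  obtain ⟨𝒱, h𝒱, h𝒱c, hA⟩ := h
  choose! U hU hWU using href
  refine ⟨U '' 𝒱, image_subset_iff.2 fun W hW => hU W (h𝒱 hW), h𝒱c.image U, hA.trans ?_⟩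
  rw [sUnion_image, sUnion_eq_biUnion]
  exact iUnion₂_mono fun W hW => hWU W (h𝒱 hW)

theorem IsCountablyCovered.image_of_preimage {α β : Type*} {f : α → β} {𝒲 : Set (Set β)} {A : Set α}
    (hA : IsCountablyCovered ((f ⁻¹' ·) '' 𝒲) A) : IsCountablyCovered 𝒲 (f '' A) := by
  obtain ⟨𝒱', h𝒱', h𝒱'c, hA𝒱'⟩ := hA
  obtain ⟨𝒱, h𝒱, hbij⟩ := SurjOn.exists_bijOn_subset (f := (f ⁻¹' ·)) h𝒱'
  refine ⟨𝒱, h𝒱, countable_of_injective_of_countable_image hbij.injOn (hbij.image_eq ▸ h𝒱'c), ?_⟩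
  rintro _ ⟨a, ha, rfl⟩
  rw [← hbij.image_eq, sUnion_image] at hA𝒱'
  obtain ⟨V, hV, haV⟩ := mem_iUnion₂.1 (hA𝒱' ha)
  exact ⟨V, hV, haV⟩

end CountableCovers

section Sequences

theorem exists_seq_forall_of_dependsOn_of_step {α : Type*} [Nonempty α] {p : ℕ → (ℕ → α) → Prop}
    (hp : ∀ n, DependsOn (p n) (Iio n)) (h0 : ∀ a, p 0 a)
    (hstep : ∀ n a, p n a → ∃ b, p (n + 1) (Function.update a n b)) : ∃ a, ∀ n, p n a := by
  choose! b hb using hstep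
  let s : ℕ → ℕ → α := fun n => n.rec (fun _ => Classical.arbitrary α)
    fun n a => Function.update a n (b n a)
  have hs : ∀ n, p n (s n) := Nat.rec (h0 _) fun n ih => hb n _ ih
  have hstable : ∀ k n, k < n → s n k = s (k + 1) k := by
    intro k n hkn
    induction n, hkn using Nat.le_induction with
    | base => rfl
    | succ n hkn ih => exact (Function.update_of_ne (Nat.ne_of_lt hkn) _ _).trans ih
  exact ⟨fun k => s (k + 1) k, fun n => (hp n fun k hk => hstable k n hk).mp (hs n)⟩

end Sequences

section Power

variable {J X : Type u} {O : J → Set X} {𝒲 : Set (Set (ℕ → X))} {n : ℕ} {K : ℕ → Set (J → Bool)}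

/-- The sequences whose first `n` terms have incidence vectors in the prescribed sets. These boxes
are the pullbacks to `X^ω` of the boxes of `(2^J)^ω` that restrict `n` coordinates. -/
def incidenceBox (O : J → Set X) (n : ℕ) (Z : ℕ → Set (J → Bool)) : Set (ℕ → X) :=
  {x | ∀ k < n, incidence O (x k) ∈ Z k}

/-- The first `n` of the sets `K k` have closed Baire supersets whose box is countably covered by
`𝒲`. The failure of this property is what is propagated from `n` to `n + 1`. -/
def IsBoxCovered (O : J → Set X) (𝒲 : Set (Set (ℕ → X))) (n : ℕ) (K : ℕ → Set (J → Bool)) : Prop :=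
  ∃ Z : ℕ → Set (J → Bool), (∀ k < n, IsClosedBaire (Z k) ∧ K k ⊆ Z k) ∧
    IsCountablyCovered 𝒲 (incidenceBox O n Z)

theorem dependsOn_isBoxCovered : DependsOn (IsBoxCovered O 𝒲 n) (Iio n) :=
  fun (K K' : ℕ → Set (J → Bool)) h => by
    have hsub : ∀ Z : ℕ → Set (J → Bool), (∀ k < n, IsClosedBaire (Z k) ∧ K k ⊆ Z k) ↔
        ∀ k < n, IsClosedBaire (Z k) ∧ K' k ⊆ Z k := fun Z =>
      forall₂_congr fun k hk => by rw [h k hk]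
    simp only [IsBoxCovered, hsub]

theorem ProductivelyQuasiLindelofSp.isBoxCovered_of_succ [TopologicalSpace X] [LinearOrder J]
    (hJ : ∀ j : J, (Iio j).Countable) (hcard : #J = 𝔠) (hprod : ProductivelyQuasiLindelofSp X)
    (hO : ∀ ξ, IsOpen (O ξ))
    (hstep : ∀ L, IsCompact L → L ⊆ (coverCodes O univ)ᶜ →
      IsBoxCovered O 𝒲 (n + 1) (Function.update K n L)) : IsBoxCovered O 𝒲 n K := by
  let IsGood (Z' : Set (J → Bool)) (Z : ℕ → Set (J → Bool)) : Prop :=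
    (∀ k < n, IsClosedBaire (Z k) ∧ K k ⊆ Z k) ∧
      IsCountablyCovered 𝒲 (incidenceBox O n Z ∩ {x | incidence O (x n) ∈ Z'})
  obtain ⟨𝒟, h𝒟, h𝒟c, hcov⟩ := hprod.exists_countable_range_incidence_subset_sUnion hJ hcard hO
    (𝒵 := {Z' | IsClosedBaire Z' ∧ ∃ Z, IsGood Z' Z}) (fun _ h => h.1) fun L hL hLO => by
      obtain ⟨Z, hZ, hZ𝒲⟩ := hstep L hL hLO
      obtain ⟨hZK, hZn, hLZ⟩ := Nat.forall_lt_succ_right.1 hZ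
      rw [Function.update_self] at hLZ
      refine ⟨Z n, ⟨hZn, Z, fun k hk => ?_, hZ𝒲.mono fun x hx => ?_⟩, hLZ⟩
      · simpa only [Function.update_of_ne hk.ne] using hZK k hk
      · exact Nat.forall_lt_succ_right.2 hx
  have hgood : ∀ Z' ∈ 𝒟, ∃ Z, IsGood Z' Z := fun Z' hZ' => (h𝒟 hZ').2
  choose! Z hZ hZ𝒲 using hgood
  refine ⟨fun k => ⋂ Z' ∈ 𝒟, Z Z' k, fun k hk =>
    ⟨.biInter h𝒟c fun Z' hZ' => (hZ Z' hZ' k hk).1,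
      subset_iInter₂ fun Z' hZ' => (hZ Z' hZ' k hk).2⟩,
    (isCountablyCovered_biUnion h𝒟c hZ𝒲).mono fun x hx => ?_⟩
  obtain ⟨Z', hZ', hxZ'⟩ := hcov (mem_range_self (x n))
  exact mem_biUnion hZ' ⟨fun k hk => mem_iInter₂.1 (hx k hk) Z' hZ', hxZ'⟩

theorem exists_finset_pi_subset_biUnion (hcov : ⋃₀ 𝒲 = Set.univ) (τ : 𝒲 → Finset (ℕ × J))
    (hτ : ∀ W : 𝒲, W = {x : ℕ → X | ∀ p ∈ τ W, x p.1 ∈ O p.2})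
    (hKc : ∀ k, IsCompact (K k)) (hKO : ∀ k, K k ⊆ (coverCodes O univ)ᶜ) :
    ∃ t : Finset 𝒲, univ.pi K ⊆ ⋃ W ∈ t, {z | ∀ p ∈ τ W, z p.1 p.2 = true} := by
  refine (isCompact_univ_pi hKc).elim_finite_subcover _ (fun W => ?_) fun z hz => ?_
  · have h : IsOpen (⋂ p ∈ τ W, {z : ℕ → J → Bool | z p.1 p.2 = true}) :=
      isOpen_biInter_finset fun p _ => (isOpen_discrete {true}).preimage
        (by fun_prop : Continuous fun z : ℕ → J → Bool => z p.1 p.2)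
    convert h
    ext z
    simp
  · choose x hx using fun k => notMem_coverCodes_iff.1 (hKO k (hz k trivial))
    obtain ⟨W, hW, hxW⟩ := hcov.ge (mem_univ x)
    have hxτ : ∀ p ∈ τ ⟨W, hW⟩, x p.1 ∈ O p.2 := (hτ ⟨W, hW⟩).subset hxW
    refine mem_iUnion.2 ⟨⟨W, hW⟩, fun p hp => ?_⟩
    exact hx p.1 p.2 trivial (incidence_eq_true_iff.2 (hxτ p hp))

theorem exists_isBoxCovered_of_isCompact (hcov : ⋃₀ 𝒲 = Set.univ) (τ : 𝒲 → Finset (ℕ × J))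
    (hτ : ∀ W : 𝒲, W = {x : ℕ → X | ∀ p ∈ τ W, x p.1 ∈ O p.2})
    (hKc : ∀ k, IsCompact (K k)) (hKO : ∀ k, K k ⊆ (coverCodes O univ)ᶜ) :
    ∃ n, IsBoxCovered O 𝒲 n K := by
  classical
  obtain ⟨t, ht⟩ := exists_finset_pi_subset_biUnion hcov τ hτ hKc hKO
  let F : Finset J := (t.biUnion τ).image Prod.snd
  let Z : ℕ → Set (J → Bool) := fun k => F.restrict ⁻¹' (F.restrict '' K k)
  have hZ : ∀ k, IsClosedBaire (Z k) ∧ K k ⊆ Z k := fun k =>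
    ⟨isClosedBaire_preimage_restrict F _, subset_preimage_image _ _⟩
  by_cases hne : ∀ k, (K k).Nonempty
  · obtain ⟨n, hn⟩ := ((t.biUnion τ).image Prod.fst).exists_nat_subset_range
    refine ⟨n, Z, fun k _ => hZ k, (↑) '' (t : Set 𝒲), Subtype.coe_image_subset _ _,
      t.countable_toSet.image _, fun x hx => ?_⟩
    have hz : ∀ k, ∃ z ∈ K k, k < n → F.restrict z = F.restrict (incidence O (x k)) := by
      intro k
      by_cases hk : k < n
      · obtain ⟨z, hz, hzx⟩ := hx k hk
        exact ⟨z, hz, fun _ => hzx⟩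
      · obtain ⟨z, hz⟩ := hne k
        exact ⟨z, hz, fun h => (hk h).elim⟩
    choose z hzK hzx using hz
    obtain ⟨W, hW, hzW⟩ := mem_iUnion₂.1 (ht fun k _ => hzK k)
    refine mem_sUnion.2 ⟨W, mem_image_of_mem _ hW, (hτ W).superset fun p hp => ?_⟩
    have hpt : p ∈ t.biUnion τ := Finset.mem_biUnion.2 ⟨W, hW, hp⟩
    have hpn : p.1 < n := Finset.mem_range.1 (hn (Finset.mem_image_of_mem _ hpt))
    have hpx := congrFun (hzx p.1 hpn) ⟨p.2, Finset.mem_image_of_mem _ hpt⟩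
    exact incidence_eq_true_iff.1 (hpx.symm.trans (hzW p hp))
  · push Not at hne
    obtain ⟨k, hk⟩ := hne
    refine ⟨k + 1, Z, fun k _ => hZ k, ∅, empty_subset _, countable_empty, fun x hx => ?_⟩
    simpa [Z, hk] using hx k k.lt_succ_self

theorem ProductivelyQuasiLindelofSp.isCountablyCovered_univ_of_finset [TopologicalSpace X]
    [LinearOrder J]
    (hJ : ∀ j : J, (Iio j).Countable) (hcard : #J = 𝔠) (hprod : ProductivelyQuasiLindelofSp X)
    (hO : ∀ ξ, IsOpen (O ξ)) (hcov : ⋃₀ 𝒲 = Set.univ) (τ : 𝒲 → Finset (ℕ × J))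
    (hτ : ∀ W : 𝒲, W = {x : ℕ → X | ∀ p ∈ τ W, x p.1 ∈ O p.2}) : IsCountablyCovered 𝒲 Set.univ := by
  by_contra hcon
  obtain ⟨K, hK⟩ := exists_seq_forall_of_dependsOn_of_step
    (p := fun n (K : ℕ → Set (J → Bool)) =>
      (∀ k < n, IsCompact (K k) ∧ K k ⊆ (coverCodes O univ)ᶜ) ∧ ¬ IsBoxCovered O 𝒲 n K)
    (fun n K K' h => congrArg₂ And
      (propext (forall₂_congr fun k hk => by rw [h k hk]))
      (congrArg Not (dependsOn_isBoxCovered h)))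
    (fun K => ⟨fun k hk => (Nat.not_lt_zero k hk).elim, fun ⟨Z, _, hZ⟩ =>
      hcon (hZ.mono fun x _ k hk => (Nat.not_lt_zero k hk).elim)⟩)
    fun n K ⟨hK, hKn⟩ => by
      obtain ⟨L, hL, hLO, hLn⟩ : ∃ L, IsCompact L ∧ L ⊆ (coverCodes O univ)ᶜ ∧
          ¬ IsBoxCovered O 𝒲 (n + 1) (Function.update K n L) := by
        by_contra! hstep
        exact hKn (hprod.isBoxCovered_of_succ hJ hcard hO hstep)
      refine ⟨L, Nat.forall_lt_succ_right.2 ⟨fun k hk => ?_, ?_⟩, hLn⟩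
      · simpa only [Function.update_of_ne hk.ne] using hK k hk
      · simpa only [Function.update_self] using ⟨hL, hLO⟩
  have hK' : ∀ k, IsCompact (K k) ∧ K k ⊆ (coverCodes O univ)ᶜ := fun k =>
    (hK (k + 1)).1 k k.lt_succ_self
  obtain ⟨n, hn⟩ := exists_isBoxCovered_of_isCompact hcov τ hτ (fun k => (hK' k).1)
    fun k => (hK' k).2
  exact (hK n).2 hn

end Power

section Coding

variable {J X : Type u} [TopologicalSpace X] {𝒲 : Set (Set (ℕ → X))}

theorem exists_finset_coding_of_isBasicOpen [Infinite J] (hb : ∀ W ∈ 𝒲, IsBasicOpen X W)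
    (hcard : #𝒲 ≤ #J) : ∃ (O : J → Set X) (τ : 𝒲 → Finset (ℕ × J)), (∀ ξ, IsOpen (O ξ)) ∧
      ∀ W : 𝒲, W = {x : ℕ → X | ∀ p ∈ τ W, x p.1 ∈ O p.2} := by
  classical
  choose V hVo hVf hWV using fun W : 𝒲 => hb W W.2
  let 𝒮 : Set (Set X) := insert ∅ (range fun q : 𝒲 × ℕ => V q.1 q.2)
  have h𝒮 : #𝒮 ≤ #J := by
    have h𝒲J : #(𝒲 × ℕ) ≤ #J := by
      simpa [mk_prod] using mul_le_of_le (aleph0_le_mk J) hcard (aleph0_le_mk J)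
    exact mk_insert_le.trans (add_le_of_le (aleph0_le_mk J) (mk_range_le.trans h𝒲J)
      (one_le_aleph0.trans (aleph0_le_mk J)))
  obtain ⟨O, hO⟩ := exists_range_eq_of_mk_le (insert_nonempty _ _) h𝒮
  have hV : ∀ q : 𝒲 × ℕ, ∃ ξ, O ξ = V q.1 q.2 := fun q =>
    hO.superset (mem_insert_of_mem _ (mem_range_self q))
  choose σ hσ using hV
  refine ⟨O, fun W => (hVf W).toFinset.image fun k => (k, σ (W, k)), fun ξ => ?_, fun W => ?_⟩
  · obtain h | ⟨q, h⟩ := hO.subset (mem_range_self ξ)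
    · exact h ▸ isOpen_empty
    · exact h ▸ hVo q.1 q.2
  · rw [hWV W]
    ext x
    simp only [mem_univ_pi, Finset.forall_mem_image, Finite.mem_toFinset, mem_ofPred_eq, hσ]
    exact forall_congr' fun k => ⟨fun h _ => h, fun h =>
      by_contra fun hx => hx (h fun hVk => hx (hVk ▸ mem_univ _))⟩

theorem ProductivelyQuasiLindelofSp.isCountablyCovered_univ_of_mk_le [LinearOrder J]
    (hJ : ∀ j : J, (Iio j).Countable) (hcard : #J = 𝔠) (hprod : ProductivelyQuasiLindelofSp X)
    (hb : ∀ W ∈ 𝒲, IsBasicOpen X W) (hcov : ⋃₀ 𝒲 = Set.univ) (h𝒲 : #𝒲 ≤ 𝔠) :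
    IsCountablyCovered 𝒲 Set.univ := by
  have := uncountable_of_mk_eq_continuum hcard
  obtain ⟨O, τ, hO, hτ⟩ := exists_finset_coding_of_isBasicOpen hb (h𝒲.trans hcard.ge)
  exact hprod.isCountablyCovered_univ_of_finset hJ hcard hO hcov τ hτ

end Coding

section Hull

/-- The values of the `Λ`-labelled, `ι`-branching terms form the required set. -/
theorem exists_mk_le_continuum_closed {Λ ι : Type} {X : Type u} [Countable ι] (hΛ : #Λ ≤ 𝔠)
    (N : Λ → (ι → X) → X) (x₀ : X) :
    ∃ M : Set X, x₀ ∈ M ∧ #M ≤ 𝔠 ∧ ∀ a s, (∀ i, s i ∈ M) → N a s ∈ M := by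
  let arity : Option Λ → Type := fun a => a.elim Empty fun _ => ι
  let ev : WType arity → X := WType.elim X fun
    | ⟨none, _⟩ => x₀
    | ⟨some a, s⟩ => N a s
  have hcard : #(WType arity) ≤ 𝔠 := by
    refine WType.cardinalMk_le_of_le' ((sum_le_sum _ (fun _ => 𝔠) fun a => ?_).trans ?_)
    · have : Countable (arity a) := by
        cases a
        · exact inferInstanceAs (Countable Empty)
        · assumption
      exact (power_le_power_left continuum_ne_zero (by simp)).trans continuum_power_aleph0.le
    · have : #(Option Λ) ≤ 𝔠 := by
        rw [mk_option]
        exact add_le_of_le aleph0_le_continuum hΛ (one_le_aleph0.trans aleph0_le_continuum)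
      simpa using mul_le_of_le aleph0_le_continuum this le_rfl
  refine ⟨range ev, ⟨⟨none, Empty.elim⟩, rfl⟩, ?_, fun a s hs => ?_⟩
  · simpa using mk_range_le_lift.trans (lift_le.{u}.2 hcard)
  · choose t ht using hs
    obtain rfl := funext ht
    exact ⟨⟨some a, t⟩, rfl⟩

end Hull

section Reduction

theorem IsBasicOpen.preimage_comp {X Y : Type u} [TopologicalSpace X] [TopologicalSpace Y]
    {f : Y → X} (hf : Continuous f) {W : Set (ℕ → X)} (hW : IsBasicOpen X W) :
    IsBasicOpen Y ((f ∘ ·) ⁻¹' W) := by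
  obtain ⟨V, hVo, hVf, rfl⟩ := hW
  refine ⟨fun k => f ⁻¹' V k, fun k => (hVo k).preimage hf, hVf.subset fun k hk hVk => hk ?_, rfl⟩
  change f ⁻¹' V k = Set.univ
  rw [hVk, preimage_univ]

theorem IsBasicOpen.inter_pi_nonempty {X : Type u} [TopologicalSpace X] {W : Set (ℕ → X)}
    (hW : IsBasicOpen X W) {M : Set X} {x : ℕ → X} (hxW : x ∈ W) (hx : ∀ k, x k ∈ closure M) :
    (W ∩ univ.pi fun _ => M).Nonempty := by
  obtain ⟨V, hVo, -, rfl⟩ := hW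
  choose y hyV hyM using fun k => mem_closure_iff.1 (hx k) (V k) (hVo k) (hxW k trivial)
  exact ⟨y, fun k _ => hyV k, fun k _ => hyM k⟩

theorem ProductivelyQuasiLindelofSp.of_isClosed {X : Type u} [TopologicalSpace X]
    (hprod : ProductivelyQuasiLindelofSp X) {L : Set X} (hL : IsClosed L) :
    ProductivelyQuasiLindelofSp L := by
  intro Y _ hY
  have := quasiLindelofSp_iff_lindelofSpace.1 (hprod Y hY)
  exact quasiLindelofSp_iff_lindelofSpace.2
    (hL.isClosedEmbedding_subtypeVal.prodMap (.id (X := Y))).LindelofSpace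

theorem PointLE.mk_setOf_inter_nonempty_le {Z : Type u} {𝒲 : Set (Set Z)} {κ : Cardinal.{u}}
    (h𝒲 : PointLE 𝒲 κ) (hκ : ℵ₀ ≤ κ) {A : Set Z} (hA : #A ≤ κ) :
    #{W ∈ 𝒲 | (W ∩ A).Nonempty} ≤ κ := by
  have hsub : {W ∈ 𝒲 | (W ∩ A).Nonempty} ⊆ ⋃ z ∈ A, {W ∈ 𝒲 | z ∈ W} :=
    fun W ⟨hW, z, hzW, hzA⟩ => mem_biUnion hzA ⟨hW, hzW⟩
  exact (mk_le_mk_of_subset hsub).trans <| (mk_biUnion_le _ _).trans <|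
    mul_le_of_le hκ hA (ciSup_le' fun z => h𝒲 z)

theorem mk_pi_nat_le_continuum {X : Type u} {M : Set X} (hM : #M ≤ 𝔠) :
    #(Set.univ.pi fun _ : ℕ => M) ≤ 𝔠 := by
  rw [mk_congr (Equiv.Set.univPi fun _ : ℕ => M), mk_arrow]
  simpa using power_le_power_right (c := ℵ₀) hM

variable {X : Type u} {𝒲 : Set (Set (ℕ → X))}

/-- Enumerate the members of `𝒲` containing `m` as `φ m p`, for `p ∈ 2^ω`. It suffices that `M` is
closed under a choice of a sequence outside `⋃ k, φ (m k) (p k)`. -/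
theorem PointLE.exists_mk_le_continuum_reflecting [Nonempty X] (h𝒲 : PointLE 𝒲 𝔠) :
    ∃ M : Set X, #M ≤ 𝔠 ∧ ∀ 𝒱 ⊆ {W ∈ 𝒲 | (W ∩ univ.pi fun _ => M).Nonempty}, 𝒱.Countable →
      (univ.pi fun _ => M) ⊆ ⋃₀ 𝒱 → ⋃₀ 𝒱 = Set.univ := by
  have hφ : ∀ m : ℕ → X, ∃ φ : (ℕ → Bool) → Set (ℕ → X), {W ∈ 𝒲 | m ∈ W} ⊆ range φ := by
    intro m
    obtain ⟨g⟩ : Nonempty ({W ∈ 𝒲 | m ∈ W} ↪ (ℕ → Bool)) :=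
      lift_mk_le'.1 (by simpa using h𝒲 m)
    exact ⟨Function.extend g Subtype.val fun _ => ∅, fun W hW =>
      ⟨g ⟨W, hW⟩, g.injective.extend_apply _ _ _⟩⟩
  choose φ hφ using hφ
  let u (m : ℕ → ℕ → X) (p : ℕ → ℕ → Bool) : ℕ → X :=
    Classical.epsilon fun v => ∀ k, v ∉ φ (m k) (p k)
  obtain ⟨x₀⟩ := ‹Nonempty X›
  obtain ⟨M, hx₀, hMcard, hM⟩ := exists_mk_le_continuum_closed (Λ := (ℕ → ℕ → Bool) × ℕ)
    (ι := ℕ × ℕ) (by simp) (fun a s => u (fun k i => s (k, i)) a.1 a.2) x₀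
  refine ⟨M, hMcard, fun 𝒱 h𝒱 h𝒱c hcov => by_contra fun hne => ?_⟩
  obtain ⟨v, hv⟩ := (ne_univ_iff_exists_notMem _).1 hne
  obtain ⟨W₀, hW₀, -⟩ := hcov (fun _ _ => hx₀ : (fun _ => x₀) ∈ univ.pi fun _ : ℕ => M)
  obtain ⟨V, rfl⟩ := h𝒱c.exists_eq_range ⟨W₀, hW₀⟩
  rw [range_subset_iff] at h𝒱
  choose hV m hmV hmM using h𝒱
  choose p hp using fun k => hφ (m k) ⟨hV k, hmV k⟩
  have hu : ∀ k, u m p ∉ φ (m k) (p k) := Classical.epsilon_spec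
    (p := fun v => ∀ k, v ∉ φ (m k) (p k))
    ⟨v, fun k hk => hv (mem_sUnion_of_mem (hp k ▸ hk) (mem_range_self k))⟩
  have huM : u m p ∈ univ.pi fun _ => M := fun j _ =>
    hM (p, j) (fun q => m q.1 q.2) fun q => hmM q.1 q.2 trivial
  obtain ⟨_, ⟨k, rfl⟩, huk⟩ := hcov huM
  exact hu k (hp k ▸ huk)

theorem ProductivelyQuasiLindelofSp.isCountablyCovered_univ_of_pointLE [TopologicalSpace X]
    {J : Type u} [LinearOrder J] (hJ : ∀ j : J, (Iio j).Countable) (hcard : #J = 𝔠)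
    (hprod : ProductivelyQuasiLindelofSp X) (hb : ∀ W ∈ 𝒲, IsBasicOpen X W)
    (hcov : ⋃₀ 𝒲 = Set.univ) (h𝒲 : PointLE 𝒲 𝔠) : IsCountablyCovered 𝒲 Set.univ := by
  cases isEmpty_or_nonempty X
  · exact ⟨∅, empty_subset _, countable_empty, fun x => isEmptyElim (x 0)⟩
  obtain ⟨M, hMcard, hM⟩ := h𝒲.exists_mk_le_continuum_reflecting
  let 𝒲M : Set (Set (ℕ → X)) := {W ∈ 𝒲 | (W ∩ univ.pi fun _ => M).Nonempty}
  let r : (ℕ → closure M) → ℕ → X := (Subtype.val ∘ ·)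
  have h𝒲M : #𝒲M ≤ 𝔠 :=
    h𝒲.mk_setOf_inter_nonempty_le aleph0_le_continuum (mk_pi_nat_le_continuum hMcard)
  have hcovr : ⋃₀ ((r ⁻¹' ·) '' 𝒲M) = Set.univ := eq_univ_of_forall fun z => by
    obtain ⟨W, hW, hzW⟩ := hcov.ge (mem_univ (r z))
    exact ⟨_, mem_image_of_mem _ ⟨hW, (hb W hW).inter_pi_nonempty hzW fun k => (z k).2⟩, hzW⟩
  have hclosure : IsCountablyCovered ((r ⁻¹' ·) '' 𝒲M) Set.univ :=
    (hprod.of_isClosed isClosed_closure).isCountablyCovered_univ_of_mk_le hJ hcard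
      (forall_mem_image.2 fun W hW => (hb W hW.1).preimage_comp continuous_subtype_val)
      hcovr (mk_image_le.trans h𝒲M)
  obtain ⟨𝒱, h𝒱, h𝒱c, hsub⟩ := hclosure.image_of_preimage
  have hM𝒱 : (univ.pi fun _ => M) ⊆ ⋃₀ 𝒱 := fun y hy =>
    hsub ⟨fun k => ⟨y k, subset_closure (hy k trivial)⟩, trivial, rfl⟩
  exact ⟨𝒱, h𝒱.trans (sep_subset _ _), h𝒱c, (hM 𝒱 h𝒱 h𝒱c hM𝒱).ge⟩

end Reduction

section ContinuumHypothesis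

theorem continuum_eq_aleph_one_transfer (hCH : (𝔠 : Cardinal.{v}) = ℵ₁) :
    (𝔠 : Cardinal.{u}) = ℵ₁ := by
  have hlift : lift.{u} (𝔠 : Cardinal.{v}) = lift.{u} (ℵ₁ : Cardinal.{v}) := congrArg _ hCH
  exact lift_injective.{v} (by simpa using hlift)

theorem exists_linearOrder_forall_countable_Iio {J : Type u} (hJ : #J = ℵ₁) :
    ∃ _ : LinearOrder J, ∀ j : J, (Iio j).Countable := by
  obtain ⟨_, _, hord⟩ := exists_ord_eq_type_lt J
  exact ⟨inferInstance, fun j =>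
    le_aleph0_iff_set_countable.1 (lt_aleph_one_iff.1 (hJ ▸ mk_Iio_lt j hord))⟩

end ContinuumHypothesis

/-- Under CH, a productively quasi-Lindelöf space X such that every open
cover of X^ω has a point-𝔠 refinement consisting of basic open sets is powerfully
quasi-Lindelöf. -/
theorem stmt13 (hCH : Cardinal.continuum = Cardinal.aleph 1)
    (X : Type u) [TopologicalSpace X]
    (hprod : ProductivelyQuasiLindelofSp X)
    (href : ∀ 𝒰 : Set (Set (ℕ → X)), (∀ U ∈ 𝒰, IsOpen U) → ⋃₀ 𝒰 = Set.univ →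
      ∃ 𝒲 : Set (Set (ℕ → X)), (∀ W ∈ 𝒲, IsBasicOpen X W) ∧
        (∀ W ∈ 𝒲, ∃ U ∈ 𝒰, W ⊆ U) ∧ ⋃₀ 𝒲 = Set.univ ∧
        PointLE 𝒲 Cardinal.continuum) :
    PowerfullyQuasiLindelofSp X := by
  have hcard : #(𝔠 : Cardinal.{u}).out = ℵ₁ :=
    (mk_out 𝔠).trans (continuum_eq_aleph_one_transfer hCH)
  obtain ⟨_, hIio⟩ := exists_linearOrder_forall_countable_Iio hcard
  intro 𝒰 hopen hcov
  obtain ⟨𝒲, hbasic, hrefines, hcov𝒲, hpoint⟩ := href 𝒰 hopen hcov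
  have h𝒲 : IsCountablyCovered 𝒲 Set.univ :=
    hprod.isCountablyCovered_univ_of_pointLE hIio (mk_out 𝔠) hbasic hcov𝒲 hpoint
  obtain ⟨𝒱, h𝒱, h𝒱c, huniv⟩ := h𝒲.of_refines hrefines
  exact ⟨𝒱, h𝒱, h𝒱c, univ_subset_iff.1 huniv⟩
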